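/- Let G be a connected finite simple graph with γ_{1/2}(G) = 2. Then for every integer m ≥ 2, γ_{1/2}(G □ P_m) ≥ 2·γ_{1/2}(P_m). -/

import Mathlib

/-!
A vertex dominates at most `Δ + 1` vertices, so `p n ≤ γ_p (Δ + 1)`, and `γ_p > 1` exactly when
`Δ + 1 < p n`. If `γ_{1/2}(G) > 1`, then `Δ(G) + 3 ≤ |V(G)|` by integrality. Since
`Δ(G □ P_m) ≤ Δ(G) + 2`, this gives `|V(G)| m / 2 ≤ γ_{1/2}(G □ P_m) |V(G)|`, that is,
`m / 2 ≤ γ_{1/2}(G □ P_m)`.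

On the other hand, the centers of `⌈m / 6⌉` consecutive blocks of three vertices half-dominate
`P_m`, and `2 ⌈m / 6⌉ ≤ ⌈m / 2⌉` unless `m ∈ {1, 2}`. In these two cases the claim is
`γ_{1/2}(G □ P_m) > 1`, which is inherited from `G` because `Δ(P_m) < m`.
-/

open SimpleGraph

/-- The closed neighborhood `N[S]` of a set of vertices `S`:
all vertices equal or adjacent to some vertex of `S`. -/
def closedNbhd {V : Type*} (G : SimpleGraph V) (S : Set V) : Set V :=
  {w | ∃ u ∈ S, w = u ∨ G.Adj u w}

/-- `S` is a `p`-dominating set of `G` if `N[S]` contains at least a proportion `p`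
of the vertices. -/
def IsPDomSet {V : Type*} [Fintype V] (G : SimpleGraph V) (p : ℝ) (S : Set V) : Prop :=
  p * (Fintype.card V : ℝ) ≤ ((closedNbhd G S).ncard : ℝ)

/-- The `p`-domination number `γ_p(G)`: the minimum cardinality of a `p`-dominating set. -/
noncomputable def pDomNum {V : Type*} [Fintype V] (G : SimpleGraph V) (p : ℝ) : ℕ :=
  sInf {k : ℕ | ∃ S : Set V, IsPDomSet G p S ∧ S.ncard = k}

/-- `S` is a `γ_p`-set: a `p`-dominating set of minimum cardinality `γ_p(G)`. -/
def IsGammaPSet {V : Type*} [Fintype V] (G : SimpleGraph V) (p : ℝ) (S : Set V) : Prop :=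
  IsPDomSet G p S ∧ S.ncard = pDomNum G p

/-- `v` belongs to the `p`-influencing set of `G`, i.e. the union of all `γ_p`-sets. -/
def InInfluence {V : Type*} [Fintype V] (G : SimpleGraph V) (p : ℝ) (v : V) : Prop :=
  ∃ S : Set V, IsGammaPSet G p S ∧ v ∈ S

section PartialDomination

variable {V : Type*} (G : SimpleGraph V) {p : ℝ} {S : Set V}

lemma closedNbhd_eq_biUnion (S : Set V) :
    closedNbhd G S = ⋃ v ∈ S, insert v (G.neighborSet v) := by
  ext w
  simp [closedNbhd]

lemma closedNbhd_univ : closedNbhd G Set.univ = Set.univ :=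
  Set.eq_univ_of_forall fun v => ⟨v, Set.mem_univ v, Or.inl rfl⟩

lemma ncard_insert_neighborSet (v : V) [Fintype (G.neighborSet v)] :
    (insert v (G.neighborSet v)).ncard = G.degree v + 1 := by
  rw [Set.ncard_insert_of_notMem G.notMem_neighborSet_self, Set.ncard_eq_toFinset_card',
    Set.toFinset_card, G.card_neighborSet_eq_degree]

lemma ncard_closedNbhd_singleton (v : V) [Fintype (G.neighborSet v)] :
    (closedNbhd G {v}).ncard = G.degree v + 1 := by
  rw [closedNbhd_eq_biUnion, Set.biUnion_singleton, ncard_insert_neighborSet]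

variable [Fintype V]

lemma ncard_closedNbhd_le [DecidableRel G.Adj] (S : Set V) :
    (closedNbhd G S).ncard ≤ S.ncard * (G.maxDegree + 1) := by
  lift S to Finset V using S.toFinite
  rw [closedNbhd_eq_biUnion, Set.ncard_coe_finset]
  calc (⋃ v ∈ S, insert v (G.neighborSet v)).ncard
      ≤ ∑ v ∈ S, (insert v (G.neighborSet v)).ncard := S.set_ncard_biUnion_le _
    _ ≤ S.card * (G.maxDegree + 1) := Finset.sum_le_card_nsmul _ _ _ fun v _ =>
        (ncard_insert_neighborSet G v).trans_le (Nat.succ_le_succ (G.degree_le_maxDegree v))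

variable {G} in
lemma IsPDomSet.pDomNum_le (hS : IsPDomSet G p S) : pDomNum G p ≤ S.ncard :=
  Nat.sInf_le ⟨S, hS, rfl⟩

lemma isPDomSet_univ (hp : p ≤ 1) : IsPDomSet G p Set.univ := by
  rw [IsPDomSet, closedNbhd_univ, Set.ncard_univ, Nat.card_eq_fintype_card]
  exact mul_le_of_le_one_left (Nat.cast_nonneg _) hp

lemma exists_isGammaPSet (hp : p ≤ 1) : ∃ S, IsGammaPSet G p S :=
  Nat.sInf_mem (s := {k | ∃ S, IsPDomSet G p S ∧ S.ncard = k})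
    ⟨_, Set.univ, isPDomSet_univ G hp, rfl⟩

lemma pDomNum_of_isEmpty [IsEmpty V] (p : ℝ) : pDomNum G p = 0 := by
  have h : IsPDomSet G p ∅ := by simp [IsPDomSet]
  simpa using h.pDomNum_le

lemma mul_card_le_pDomNum_mul [DecidableRel G.Adj] (hp : p ≤ 1) :
    p * Fintype.card V ≤ pDomNum G p * (G.maxDegree + 1) := by
  obtain ⟨S, hdom, hcard⟩ := exists_isGammaPSet G hp
  calc p * Fintype.card V
      ≤ (closedNbhd G S).ncard := hdom
    _ ≤ pDomNum G p * (G.maxDegree + 1) := by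
        rw [← hcard]
        exact_mod_cast ncard_closedNbhd_le G S

lemma one_lt_pDomNum_iff [DecidableRel G.Adj] (hp : p ≤ 1) :
    1 < pDomNum G p ↔ (G.maxDegree + 1 : ℝ) < p * Fintype.card V := by
  refine ⟨fun h => ?_, fun h => ?_⟩
  · by_contra! hle
    cases isEmpty_or_nonempty V
    · simp [pDomNum_of_isEmpty] at h
    · obtain ⟨v, hv⟩ := G.exists_maximal_degree_vertex
      have hdom : IsPDomSet G p {v} := by
        rw [IsPDomSet, ncard_closedNbhd_singleton, ← hv]
        exact_mod_cast hle
      exact h.not_ge (hdom.pDomNum_le.trans_eq (Set.ncard_singleton v))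
  · by_contra! hle
    have hle' : (pDomNum G p : ℝ) ≤ 1 := by exact_mod_cast hle
    have hpos : (0 : ℝ) ≤ G.maxDegree + 1 := by positivity
    exact h.not_ge ((mul_card_le_pDomNum_mul G hp).trans (mul_le_of_le_one_left hpos hle'))

end PartialDomination

section BoxProd

variable {V W : Type*} [Fintype V] [Fintype W] (G : SimpleGraph V) (H : SimpleGraph W) {p : ℝ}

lemma maxDegree_boxProd_le [DecidableRel G.Adj] [DecidableRel H.Adj]
    [DecidableRel (G □ H).Adj] : (G □ H).maxDegree ≤ G.maxDegree + H.maxDegree := by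
  refine maxDegree_le_of_forall_degree_le _ _ fun x => ?_
  rw [degree_boxProd]
  exact add_le_add (G.degree_le_maxDegree x.1) (H.degree_le_maxDegree x.2)

lemma one_lt_pDomNum_boxProd [Nonempty W] (hp : p ≤ 1) (hG : 1 < pDomNum G p) :
    1 < pDomNum (G □ H) p := by
  classical
  rw [one_lt_pDomNum_iff _ hp] at hG ⊢
  have hΔ : (G □ H).maxDegree + 1 ≤ G.maxDegree + Fintype.card W :=
    (Nat.succ_le_succ (maxDegree_boxProd_le G H)).trans
      (Nat.add_le_add_left H.maxDegree_lt_card_verts _)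
  have hW : (1 : ℝ) ≤ Fintype.card W := by exact_mod_cast Fintype.card_pos (α := W)
  calc ((G □ H).maxDegree + 1 : ℝ)
      ≤ G.maxDegree + Fintype.card W := by exact_mod_cast hΔ
    _ ≤ G.maxDegree * Fintype.card W + Fintype.card W := by
        gcongr
        exact le_mul_of_one_le_right (Nat.cast_nonneg _) hW
    _ = (G.maxDegree + 1) * Fintype.card W := by ring
    _ < p * Fintype.card V * Fintype.card W := by gcongr
    _ = p * Fintype.card (V × W) := by rw [Fintype.card_prod, Nat.cast_mul, mul_assoc]

lemma card_le_two_mul_pDomNum_half_boxProd [DecidableRel H.Adj] (hG : 1 < pDomNum G (1 / 2))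
    (hH : H.maxDegree ≤ 2) : Fintype.card W ≤ 2 * pDomNum (G □ H) (1 / 2) := by
  classical
  set k := pDomNum (G □ H) (1 / 2)
  have hV : G.maxDegree + 3 ≤ Fintype.card V := by
    have hlt := (one_lt_pDomNum_iff G (by norm_num)).1 hG
    have : 2 * (G.maxDegree + 1) < Fintype.card V := by
      rify
      linarith
    omega
  have hcount : Fintype.card V * Fintype.card W ≤ 2 * k * ((G □ H).maxDegree + 1) := by
    have hle := mul_card_le_pDomNum_mul (G □ H) (p := 1 / 2) (by norm_num)
    rw [Fintype.card_prod] at hle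
    push_cast at hle
    rify
    linarith
  have hΔ : (G □ H).maxDegree + 1 ≤ Fintype.card V := by
    have := maxDegree_boxProd_le G H
    omega
  refine Nat.le_of_mul_le_mul_left ?_ (show 0 < Fintype.card V by omega)
  calc Fintype.card V * Fintype.card W
      ≤ 2 * k * ((G □ H).maxDegree + 1) := hcount
    _ ≤ 2 * k * Fintype.card V := Nat.mul_le_mul_left _ hΔ
    _ = Fintype.card V * (2 * k) := mul_comm _ _

end BoxProd

section PathGraph

lemma maxDegree_pathGraph_le_two (m : ℕ) [DecidableRel (pathGraph m).Adj] :
    (pathGraph m).maxDegree ≤ 2 := by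
  refine (maxDegree_mono pathGraph_le_cycleGraph).trans
    (maxDegree_le_of_forall_degree_le _ _ fun v => ?_)
  match m with
  | 0 => exact v.elim0
  | 1 => simp
  | m + 2 => exact cycleGraph_degree_two_le.trans_le Finset.card_le_two

lemma exists_min_le_ncard_closedNbhd_pathGraph (m t : ℕ) :
    ∃ S : Set (Fin m), S.ncard ≤ t ∧ min m (3 * t) ≤ (closedNbhd (pathGraph m) S).ncard := by
  obtain _ | m := m
  · exact ⟨∅, by simp, by simp⟩
  -- If the last block has a single vertex, clamping makes that vertex its center.
  let center (i : ℕ) : Fin (m + 1) := Fin.clamp (3 * i + 1) m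
  refine ⟨(Finset.range t).image center, ?_, ?_⟩
  · rw [Set.ncard_coe_finset]
    exact Finset.card_image_le.trans_eq (Finset.card_range t)
  · rw [← Fin.card_filter_val_lt, ← Set.ncard_coe_finset]
    refine Set.ncard_le_ncard (fun j hj => ?_) (Set.toFinite _)
    have hj : j.val < 3 * t := by simpa using hj
    have hmem : center (j / 3) ∈ (Finset.range t).image center :=
      Finset.mem_image_of_mem _ (Finset.mem_range.2 (by omega))
    refine ⟨center (j / 3), hmem, ?_⟩
    simp only [center, pathGraph_adj, Fin.ext_iff, Fin.coe_clamp]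
    omega

lemma pDomNum_pathGraph_le {p : ℝ} (hp : p ≤ 1) (m : ℕ) :
    pDomNum (pathGraph m) p ≤ ⌈p * m / 3⌉₊ := by
  set t := ⌈p * m / 3⌉₊
  obtain ⟨S, hcard, hnbhd⟩ := exists_min_le_ncard_closedNbhd_pathGraph m t
  have hdom : IsPDomSet (pathGraph m) p S := by
    have ht : p * m / 3 ≤ t := Nat.le_ceil _
    calc p * Fintype.card (Fin m)
        ≤ min (m : ℝ) (3 * t) := by
          rw [Fintype.card_fin]
          exact le_min (mul_le_of_le_one_left (Nat.cast_nonneg _) hp) (by linarith)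
      _ ≤ (closedNbhd (pathGraph m) S).ncard := by exact_mod_cast hnbhd
  exact hdom.pDomNum_le.trans hcard

lemma six_mul_pDomNum_half_pathGraph_lt (m : ℕ) :
    6 * pDomNum (pathGraph m) (1 / 2) < m + 6 := by
  have hle : (pDomNum (pathGraph m) (1 / 2) : ℝ) ≤ ⌈(1 / 2 : ℝ) * m / 3⌉₊ := by
    exact_mod_cast pDomNum_pathGraph_le (by norm_num) m
  have hlt : (⌈(1 / 2 : ℝ) * m / 3⌉₊ : ℝ) < 1 / 2 * m / 3 + 1 :=
    Nat.ceil_lt_add_one (by positivity)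
  rify
  linarith

end PathGraph

theorem stmt5_general {V : Type*} [Fintype V] (G : SimpleGraph V) (hG : 1 < pDomNum G (1 / 2))
    (m : ℕ) : 2 * pDomNum (pathGraph m) (1 / 2) ≤ pDomNum (G □ pathGraph m) (1 / 2) := by
  classical
  have hpath := six_mul_pDomNum_half_pathGraph_lt m
  have hhalf : m ≤ 2 * pDomNum (G □ pathGraph m) (1 / 2) := by
    simpa using card_le_two_mul_pDomNum_half_boxProd G _ hG (maxDegree_pathGraph_le_two m)
  obtain rfl | hm := m.eq_zero_or_pos
  · omega
  · have : Nonempty (Fin m) := ⟨⟨0, hm⟩⟩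
    have hone := one_lt_pDomNum_boxProd G (pathGraph m) (by norm_num) hG
    omega

theorem stmt5 {V : Type*} [Fintype V] (G : SimpleGraph V) (hconn : G.Connected)
    (hG : pDomNum G (1/2) = 2) (m : ℕ) (hm : 2 ≤ m) :
    2 * pDomNum (pathGraph m) (1/2) ≤ pDomNum (G □ pathGraph m) (1/2) :=
  stmt5_general G hG.ge m
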